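/- arXiv:1212.5775 — 3 statements merged into one kernel-verified Lean document; each statement's English description precedes it below -/
import Mathlib

section
/- Let k be a field, H a k-bialgebra, and G ⊆ H a submonoid consisting of group-like elements that is almost central via a monoid homomorphism I : G → Aut(H) into the group of bialgebra automorphisms of H. Then the right ring of fractions L = H[G⁻¹] (the Ore localization of the algebra H at G) carries a comultiplication Δ_L : L → L ⊗ₖ L and a counit ε_L : L → k, determined by Δ_L(x/g) = Σ (x′/g) ⊗ (x″/g) and ε_L(x/g) = ε(x) (where Δ(x) = Σ x′ ⊗ x″ in Sweedler notation), which make L into a k-bialgebra, and the localization map φ : H → L, x ↦ x/1, is a homomorphism of bialgebras (a k-algebra homomorphism with (φ ⊗ φ) ∘ Δ = Δ_L ∘ φ and ε_L ∘ φ = ε). -/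
open scoped TensorProduct

/-!
A fraction ring `φ : H → L` has the universal property of inverting `G`: the pairs
`(φ x * (φ g)⁻¹, f x * (f g)⁻¹)` form a subalgebra of `L × A`, and if `f : H → A` sends `G` to units
this subalgebra is the graph of an extension of `f`. Since every `g ∈ G` is group-like,
`(φ ⊗ φ) ∘ Δ` sends it to the unit `φ g ⊗ φ g` and `ε` sends it to `1`, so both maps extend to `L`.
The bialgebra axioms for the extensions are equalities of algebra homomorphisms out of `L`, and
these may be checked after composing with `φ`. The inverse of a group-like unit is group-like, which
gives the formulas on fractions.
-/

/-- `φ : H →ₐ[k] L` exhibits `L` as the right ring of fractions `H[G⁻¹]`: elements of `G` become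
units, every element of `L` is a fraction `φ x * (φ g)⁻¹`, and the kernel of `φ` is the right
`G`-torsion of `H`. The three fields are the conditions (F1), (F2), (F3) of the paper. -/
structure IsRightFractionRing {k H L : Type*} [CommSemiring k] [Ring H] [Algebra k H] [Ring L]
    [Algebra k L] (G : Submonoid H) (φ : H →ₐ[k] L) : Prop where
  isUnit_map : ∀ g ∈ G, IsUnit (φ g)
  exists_eq_mul_inverse : ∀ a : L, ∃ x : H, ∃ g ∈ G, a = φ x * Ring.inverse (φ g)
  map_eq_zero_iff : ∀ x : H, φ x = 0 ↔ ∃ g ∈ G, x * g = 0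

section FractionArithmetic

variable {F R S : Type*} [FunLike F R S] {x y g s z t : R} {a b : S}

theorem mul_mul_map_eq [Semigroup R] [Semigroup S] [MulHomClass F R S] (f : F)
    (ha : a * f g = f x) (hb : b * f s = f y) (hyt : y * t = g * z) :
    a * b * f (s * t) = f (x * z) := by
  calc a * b * f (s * t) = a * (b * f s * f t) := by simp only [map_mul, mul_assoc]
    _ = a * f g * f z := by rw [hb, ← map_mul, hyt, map_mul, mul_assoc]
    _ = f (x * z) := by rw [ha, map_mul]

theorem add_mul_map_eq [NonUnitalSemiring R] [NonUnitalSemiring S] [NonUnitalRingHomClass F R S]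
    (f : F) (ha : a * f g = f x) (hb : b * f s = f y) (hgt : g * t = s * z) :
    (a + b) * f (g * t) = f (x * t + y * z) := by
  calc (a + b) * f (g * t) = a * f (g * t) + b * f (s * z) := by rw [add_mul, ← hgt]
    _ = a * f g * f t + b * f s * f z := by simp only [map_mul, mul_assoc]
    _ = f (x * t + y * z) := by rw [ha, hb, map_add, map_mul, map_mul]

end FractionArithmetic

namespace IsRightFractionRing

section Lift

variable {k H L A : Type*} [CommSemiring k] [Ring H] [Algebra k H] [Ring L] [Algebra k L]
  [Semiring A] [Algebra k A] {G : Submonoid H} {φ : H →ₐ[k] L}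

theorem exists_mul_map_eq (h : IsRightFractionRing G φ) (a : L) :
    ∃ x : H, ∃ g ∈ G, a * φ g = φ x := by
  obtain ⟨x, g, hg, rfl⟩ := h.exists_eq_mul_inverse a
  exact ⟨x, g, hg, Ring.inverse_mul_cancel_right _ _ (h.isUnit_map g hg)⟩

theorem map_eq_map_iff (h : IsRightFractionRing G φ) {x y : H} :
    φ x = φ y ↔ ∃ g ∈ G, x * g = y * g := by
  simpa only [map_sub, sub_mul, sub_eq_zero] using h.map_eq_zero_iff (x - y)

/-- The right Ore condition, obtained by writing the left fraction `(φ g)⁻¹ * φ x` as a right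
fraction. -/
theorem exists_mul_eq_mul (h : IsRightFractionRing G φ) (x : H) {g : H} (hg : g ∈ G) :
    ∃ y : H, ∃ s ∈ G, x * s = g * y := by
  obtain ⟨y, s, hs, hys⟩ := h.exists_mul_map_eq (Ring.inverse (φ g) * φ x)
  have hφ : φ (x * s) = φ (g * y) := by
    rw [map_mul, map_mul, ← hys, mul_assoc, Ring.mul_inverse_cancel_left _ _ (h.isUnit_map g hg)]
  obtain ⟨u, hu, hxy⟩ := h.map_eq_map_iff.1 hφ
  exact ⟨y * u, s * u, G.mul_mem hs hu, by rw [← mul_assoc, hxy, mul_assoc]⟩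

theorem algHom_ext (h : IsRightFractionRing G φ) {F F' : L →ₐ[k] A}
    (hF : F.comp φ = F'.comp φ) : F = F' := by
  ext a
  obtain ⟨x, g, hg, hag⟩ := h.exists_mul_map_eq a
  have hFφ (y : H) : F (φ y) = F' (φ y) := DFunLike.congr_fun hF y
  refine ((h.isUnit_map g hg).map F).mul_right_cancel ?_
  rw [← map_mul, hag, hFφ g, hFφ x, ← map_mul, hag]

/-- The graph of the extension of `f : H →ₐ[k] A` to `L`: the pairs `(a, b)` that are represented by
one fraction, `a = φ x * (φ g)⁻¹` and `b = f x * (f g)⁻¹`. -/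
def liftGraph (h : IsRightFractionRing G φ) (f : H →ₐ[k] A) : Subalgebra k (L × A) where
  carrier := {p | ∃ x : H, ∃ g ∈ G, p.1 * φ g = φ x ∧ p.2 * f g = f x}
  mul_mem' := by
    rintro ⟨a, b⟩ ⟨a', b'⟩ ⟨x, g, hg, ha, hb⟩ ⟨y, s, hs, ha', hb'⟩
    obtain ⟨z, t, ht, hyt⟩ := h.exists_mul_eq_mul y hg
    exact ⟨x * z, s * t, G.mul_mem hs ht, mul_mul_map_eq φ ha ha' hyt, mul_mul_map_eq f hb hb' hyt⟩
  add_mem' := by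
    rintro ⟨a, b⟩ ⟨a', b'⟩ ⟨x, g, hg, ha, hb⟩ ⟨y, s, hs, ha', hb'⟩
    obtain ⟨z, t, ht, hgt⟩ := h.exists_mul_eq_mul g hs
    exact ⟨x * t + y * z, g * t, G.mul_mem hg ht, add_mul_map_eq φ ha ha' hgt,
      add_mul_map_eq f hb hb' hgt⟩
  algebraMap_mem' r := ⟨algebraMap k H r, 1, G.one_mem, by simp, by simp⟩

theorem map_mem_liftGraph (h : IsRightFractionRing G φ) (f : H →ₐ[k] A) (x : H) :
    (φ x, f x) ∈ h.liftGraph f :=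
  ⟨x, 1, G.one_mem, by simp, by simp⟩

theorem eq_of_mem_liftGraph (h : IsRightFractionRing G φ) {f : H →ₐ[k] A}
    (hf : ∀ g ∈ G, IsUnit (f g)) {a : L} {b b' : A}
    (hb : (a, b) ∈ h.liftGraph f) (hb' : (a, b') ∈ h.liftGraph f) : b = b' := by
  obtain ⟨x, g, hg, hax, hbx⟩ := hb
  obtain ⟨y, s, hs, hay, hby⟩ := hb'
  obtain ⟨z, t, ht, hgt⟩ := h.exists_mul_eq_mul g hs
  have hφ : φ (x * t) = φ (y * z) := by
    rw [map_mul, map_mul, ← hax, ← hay, mul_assoc, mul_assoc, ← map_mul, ← map_mul, hgt]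
  obtain ⟨u, hu, hxyu⟩ := h.map_eq_map_iff.1 hφ
  have hfxy : f (x * t) = f (y * z) :=
    (hf u hu).mul_right_cancel (by rw [← map_mul, ← map_mul, hxyu])
  refine (hf (g * t) (G.mul_mem hg ht)).mul_right_cancel ?_
  calc b * f (g * t) = f (x * t) := by rw [map_mul, ← mul_assoc, hbx, map_mul]
    _ = f (y * z) := hfxy
    _ = b' * f (g * t) := by rw [hgt, map_mul, ← hby, mul_assoc, ← map_mul]

theorem bijective_fst_liftGraph (h : IsRightFractionRing G φ) {f : H →ₐ[k] A}
    (hf : ∀ g ∈ G, IsUnit (f g)) :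
    Function.Bijective ((AlgHom.fst k L A).comp (h.liftGraph f).val) := by
  constructor
  · rintro ⟨⟨a, b⟩, hb⟩ ⟨⟨a', b'⟩, hb'⟩ (rfl : a = a')
    exact Subtype.ext (Prod.ext rfl (h.eq_of_mem_liftGraph hf hb hb'))
  · intro a
    obtain ⟨x, g, hg, hag⟩ := h.exists_mul_map_eq a
    exact ⟨⟨(a, f x * Ring.inverse (f g)), x, g, hg, hag,
      Ring.inverse_mul_cancel_right _ _ (hf g hg)⟩, rfl⟩

/-- The universal property of `L = H[G⁻¹]`: an algebra homomorphism from `H` that maps `G` to units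
extends to `L`. -/
noncomputable def lift (h : IsRightFractionRing G φ) (f : H →ₐ[k] A)
    (hf : ∀ g ∈ G, IsUnit (f g)) : L →ₐ[k] A :=
  ((AlgHom.snd k L A).comp (h.liftGraph f).val).comp
    (AlgEquiv.ofBijective _ (h.bijective_fst_liftGraph hf)).symm.toAlgHom

theorem lift_comp (h : IsRightFractionRing G φ) (f : H →ₐ[k] A) (hf : ∀ g ∈ G, IsUnit (f g)) :
    (h.lift f hf).comp φ = f := by
  ext x
  have hx : (AlgEquiv.ofBijective _ (h.bijective_fst_liftGraph hf)).symm (φ x) =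
      ⟨(φ x, f x), h.map_mem_liftGraph f x⟩ :=
    (AlgEquiv.symm_apply_eq _).2 rfl
  exact congrArg (fun p : h.liftGraph f => p.1.2) hx

end Lift

end IsRightFractionRing

section BialgebraAxioms

variable {k H L : Type*} [CommSemiring k] [Semiring H] [Bialgebra k H] [Semiring L] [Algebra k L]
  {φ : H →ₐ[k] L} {Δ : L →ₐ[k] L ⊗[k] L} {ε : L →ₐ[k] k}

theorem coassoc_comp_of_comp_eq
    (hΔ : Δ.comp φ = (Algebra.TensorProduct.map φ φ).comp (Bialgebra.comulAlgHom k H)) :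
    ((Algebra.TensorProduct.assoc k k k L L L).toAlgHom.comp
      ((Algebra.TensorProduct.map Δ (.id k L)).comp Δ)).comp φ =
    ((Algebra.TensorProduct.map (.id k L) Δ).comp Δ).comp φ := by
  let p : H →ₗ[k] L := φ.toLinearMap
  let d : L →ₗ[k] L ⊗[k] L := Δ.toLinearMap
  let δ : H →ₗ[k] H ⊗[k] H := Coalgebra.comul
  have hd : d ∘ₗ p = TensorProduct.map p p ∘ₗ δ := congrArg AlgHom.toLinearMap hΔ
  have hd_apply (x : H) : d (p x) = TensorProduct.map p p (δ x) := LinearMap.congr_fun hd x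
  ext x
  calc TensorProduct.assoc k L L L (d.rTensor L (d (p x)))
      = TensorProduct.assoc k L L L
          (TensorProduct.map (TensorProduct.map p p) p (δ.rTensor H (δ x))) := by
        rw [hd_apply, LinearMap.rTensor_map, hd, LinearMap.map_rTensor]
    _ = TensorProduct.map p (TensorProduct.map p p)
          (TensorProduct.assoc k H H H (δ.rTensor H (δ x))) :=
        (TensorProduct.map_map_assoc ..).symm
    _ = TensorProduct.map p (TensorProduct.map p p) (δ.lTensor H (δ x)) := by
        rw [Coalgebra.coassoc_apply]
    _ = d.lTensor L (d (p x)) := by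
        rw [hd_apply, LinearMap.lTensor_map, hd, LinearMap.map_lTensor]

theorem rTensor_counit_comp_of_comp_eq
    (hΔ : Δ.comp φ = (Algebra.TensorProduct.map φ φ).comp (Bialgebra.comulAlgHom k H))
    (hε : ε.comp φ = Bialgebra.counitAlgHom k H) :
    ((Algebra.TensorProduct.map ε (.id k L)).comp Δ).comp φ =
      (Algebra.TensorProduct.lid k L).symm.toAlgHom.comp φ := by
  rw [AlgHom.comp_assoc, hΔ, ← AlgHom.comp_assoc, ← Algebra.TensorProduct.map_comp, hε,
    AlgHom.id_comp]
  ext x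
  calc TensorProduct.map Coalgebra.counit φ.toLinearMap (Coalgebra.comul x)
      = φ.toLinearMap.lTensor k (Coalgebra.counit.rTensor H (Coalgebra.comul x)) := by
        rw [← LinearMap.lTensor_comp_rTensor, LinearMap.comp_apply]
    _ = 1 ⊗ₜ φ x := by rw [Coalgebra.rTensor_counit_comul]; rfl

theorem lTensor_counit_comp_of_comp_eq
    (hΔ : Δ.comp φ = (Algebra.TensorProduct.map φ φ).comp (Bialgebra.comulAlgHom k H))
    (hε : ε.comp φ = Bialgebra.counitAlgHom k H) :
    ((Algebra.TensorProduct.map (.id k L) ε).comp Δ).comp φ =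
      (Algebra.TensorProduct.rid k k L).symm.toAlgHom.comp φ := by
  rw [AlgHom.comp_assoc, hΔ, ← AlgHom.comp_assoc, ← Algebra.TensorProduct.map_comp, hε,
    AlgHom.id_comp]
  ext x
  calc TensorProduct.map φ.toLinearMap Coalgebra.counit (Coalgebra.comul x)
      = φ.toLinearMap.rTensor k (Coalgebra.counit.lTensor H (Coalgebra.comul x)) := by
        rw [← LinearMap.rTensor_comp_lTensor, LinearMap.comp_apply]
    _ = φ x ⊗ₜ 1 := by rw [Coalgebra.lTensor_counit_comul]; rfl

end BialgebraAxioms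

section GroupLike

variable {k A : Type*} [CommSemiring k] [Semiring A] [Bialgebra k A] {g : A}

theorem isGroupLikeElem_ringInverse (hg : IsGroupLikeElem k g) (hu : IsUnit g) :
    IsGroupLikeElem k (Ring.inverse g) :=
  hg.of_mul_eq_one (Ring.mul_inverse_cancel g hu) (Ring.inverse_mul_cancel g hu)

theorem comul_mul_ringInverse (hg : IsGroupLikeElem k g) (hu : IsUnit g) (a : A) :
    Coalgebra.comul (R := k) (a * Ring.inverse g) =
      Coalgebra.comul (R := k) a * (Ring.inverse g ⊗ₜ[k] Ring.inverse g) := by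
  rw [Bialgebra.comul_mul, (isGroupLikeElem_ringInverse hg hu).comul_eq_tmul_self]

theorem counit_mul_ringInverse (hg : IsGroupLikeElem k g) (hu : IsUnit g) (a : A) :
    Coalgebra.counit (R := k) (a * Ring.inverse g) = Coalgebra.counit (R := k) a := by
  rw [Bialgebra.counit_mul, (isGroupLikeElem_ringInverse hg hu).counit_eq_one, mul_one]

end GroupLike

theorem isUnit_tmul {k A B : Type*} [CommSemiring k] [Semiring A] [Algebra k A] [Semiring B]
    [Algebra k B] {a : A} {b : B} (ha : IsUnit a) (hb : IsUnit b) : IsUnit (a ⊗ₜ[k] b) := by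
  simpa using (ha.map (Algebra.TensorProduct.includeLeft : A →ₐ[k] A ⊗[k] B)).mul
    (hb.map (Algebra.TensorProduct.includeRight : B →ₐ[k] A ⊗[k] B))

namespace IsRightFractionRing

variable {k H L : Type*} [CommSemiring k] [Ring H] [Bialgebra k H] [Ring L] [Algebra k L]
  {G : Submonoid H} {φ : H →ₐ[k] L}

/-- The comultiplication of `L = H[G⁻¹]`, the extension of `(φ ⊗ φ) ∘ Δ` from `H` to `L`. -/
noncomputable def comul (h : IsRightFractionRing G φ) (hG : ∀ g ∈ G, IsGroupLikeElem k g) :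
    L →ₐ[k] L ⊗[k] L :=
  h.lift ((Algebra.TensorProduct.map φ φ).comp (Bialgebra.comulAlgHom k H)) fun g hg => by
    simpa [(hG g hg).comul_eq_tmul_self] using isUnit_tmul (h.isUnit_map g hg) (h.isUnit_map g hg)

/-- The counit of `L = H[G⁻¹]`, the extension of the counit from `H` to `L`. -/
noncomputable def counit (h : IsRightFractionRing G φ) (hG : ∀ g ∈ G, IsGroupLikeElem k g) :
    L →ₐ[k] k :=
  h.lift (Bialgebra.counitAlgHom k H) fun g hg => by
    simp [(hG g hg).counit_eq_one]

theorem comul_comp (h : IsRightFractionRing G φ) (hG : ∀ g ∈ G, IsGroupLikeElem k g) :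
    (h.comul hG).comp φ = (Algebra.TensorProduct.map φ φ).comp (Bialgebra.comulAlgHom k H) :=
  h.lift_comp _ _

theorem counit_comp (h : IsRightFractionRing G φ) (hG : ∀ g ∈ G, IsGroupLikeElem k g) :
    (h.counit hG).comp φ = Bialgebra.counitAlgHom k H :=
  h.lift_comp _ _

/-- The bialgebra structure on `L = H[G⁻¹]`. It is not an instance because it depends on `φ`. -/
noncomputable abbrev bialgebra (h : IsRightFractionRing G φ)
    (hG : ∀ g ∈ G, IsGroupLikeElem k g) : Bialgebra k L :=
  Bialgebra.ofAlgHom (h.comul hG) (h.counit hG)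
    (h.algHom_ext (coassoc_comp_of_comp_eq (h.comul_comp hG)))
    (h.algHom_ext (rTensor_counit_comp_of_comp_eq (h.comul_comp hG) (h.counit_comp hG)))
    (h.algHom_ext (lTensor_counit_comp_of_comp_eq (h.comul_comp hG) (h.counit_comp hG)))

/-- The localization map `φ` as a homomorphism of bialgebras. -/
noncomputable def bialgHom (h : IsRightFractionRing G φ) (hG : ∀ g ∈ G, IsGroupLikeElem k g) :
    letI := h.bialgebra hG
    H →ₐc[k] L :=
  letI := h.bialgebra hG
  BialgHom.ofAlgHom φ (h.counit_comp hG) (h.comul_comp hG).symm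

theorem isGroupLikeElem_map (h : IsRightFractionRing G φ) (hG : ∀ g ∈ G, IsGroupLikeElem k g)
    {g : H} (hg : g ∈ G) :
    letI := h.bialgebra hG
    IsGroupLikeElem k (φ g) :=
  letI := h.bialgebra hG
  (hG g hg).map (h.bialgHom hG)

end IsRightFractionRing

theorem stmt_4_general {k H L : Type*} [CommSemiring k] [Ring H] [Bialgebra k H] [Ring L]
    [Algebra k L] {G : Submonoid H} {φ : H →ₐ[k] L} (h : IsRightFractionRing G φ)
    (hG : ∀ g ∈ G, IsGroupLikeElem k g) :
    ∃ (Δ : L →ₗ[k] L ⊗[k] L) (ε : L →ₗ[k] k),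
      (∀ x : H, ∀ g ∈ G,
        Δ (φ x * Ring.inverse (φ g)) =
          TensorProduct.map φ.toLinearMap φ.toLinearMap (Coalgebra.comul (R := k) x) *
            (Ring.inverse (φ g) ⊗ₜ[k] Ring.inverse (φ g))) ∧
      (∀ x : H, ∀ g ∈ G,
        ε (φ x * Ring.inverse (φ g)) = Coalgebra.counit (R := k) x) ∧
      (∀ a : L, (TensorProduct.assoc k L L L)
          (TensorProduct.map Δ (LinearMap.id : L →ₗ[k] L) (Δ a)) =
        TensorProduct.map (LinearMap.id : L →ₗ[k] L) Δ (Δ a)) ∧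
      (∀ a : L, (TensorProduct.lid k L)
        (TensorProduct.map ε (LinearMap.id : L →ₗ[k] L) (Δ a)) = a) ∧
      (∀ a : L, (TensorProduct.rid k L)
        (TensorProduct.map (LinearMap.id : L →ₗ[k] L) ε (Δ a)) = a) ∧
      Δ 1 = 1 ∧ (∀ a b : L, Δ (a * b) = Δ a * Δ b) ∧
      ε 1 = 1 ∧ (∀ a b : L, ε (a * b) = ε a * ε b) ∧
      (∀ x : H, Δ (φ x) =
        TensorProduct.map φ.toLinearMap φ.toLinearMap (Coalgebra.comul (R := k) x)) ∧
      (∀ x : H, ε (φ x) = Coalgebra.counit (R := k) x) := by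
  let := h.bialgebra hG
  have hΔ (x : H) : Coalgebra.comul (R := k) (φ x) =
      TensorProduct.map φ.toLinearMap φ.toLinearMap (Coalgebra.comul (R := k) x) :=
    DFunLike.congr_fun (h.comul_comp hG) x
  have hε (x : H) : Coalgebra.counit (R := k) (φ x) = Coalgebra.counit (R := k) x :=
    DFunLike.congr_fun (h.counit_comp hG) x
  refine ⟨Coalgebra.comul, Coalgebra.counit, fun x g hg => ?_, fun x g hg => ?_,
    Coalgebra.coassoc_apply, fun a => ?_, fun a => ?_, Bialgebra.comul_one, Bialgebra.comul_mul,
    Bialgebra.counit_one, Bialgebra.counit_mul, hΔ, hε⟩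
  · rw [comul_mul_ringInverse (h.isGroupLikeElem_map hG hg) (h.isUnit_map g hg), hΔ]
  · rw [counit_mul_ringInverse (h.isGroupLikeElem_map hG hg) (h.isUnit_map g hg), hε]
  · exact (congrArg _ (Coalgebra.rTensor_counit_comul a)).trans (by simp)
  · exact (congrArg _ (Coalgebra.lTensor_counit_comul a)).trans (by simp)

/-- Let `k` be a field, `H` a `k`-bialgebra, and `G ⊆ H` a submonoid
consisting of group-like elements that is almost central via a monoid homomorphism
`I : G → Aut H` into the group of bialgebra automorphisms of `H` (formalized as algebra
automorphisms that commute with the comultiplication and the counit), i.e.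
(C1) `g·x = I_g(x)·g` and (C2) each `I_g` maps `G` bijectively onto `G`.
Then the right ring of fractions `L = H[G⁻¹]` — formalized, following the paper's
Definition 2.4, as a `k`-algebra `L` with an algebra homomorphism `φ : H → L`
satisfying (F1), (F2), (F3) — carries a comultiplication `Δ_L : L → L ⊗ₖ L` and a counit
`ε_L : L → k`, determined by `Δ_L(x/g) = Σ (x′/g) ⊗ (x″/g)` and `ε_L(x/g) = ε(x)`,
which make `L` into a `k`-bialgebra, and the localization map `φ` is a homomorphism of
bialgebras. -/
theorem stmt_4 {k H L : Type*} [Field k] [Ring H] [Bialgebra k H] [Ring L] [Algebra k L]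
    (G : Submonoid H)
    (hGgl : ∀ g ∈ G, Coalgebra.comul (R := k) g = g ⊗ₜ[k] g ∧
      Coalgebra.counit (R := k) g = (1 : k))
    (I : G →* (H ≃ₐ[k] H))
    (hIco : ∀ (g : G) (x : H), Coalgebra.comul (R := k) (I g x) =
      TensorProduct.map (I g).toLinearMap (I g).toLinearMap (Coalgebra.comul (R := k) x))
    (hIcu : ∀ (g : G) (x : H),
      Coalgebra.counit (R := k) (I g x) = Coalgebra.counit (R := k) x)
    (hC1 : ∀ (g : G) (x : H), (g : H) * x = I g x * (g : H))
    (hC2 : ∀ g : G, Set.BijOn (I g) (G : Set H) (G : Set H))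
    (φ : H →ₐ[k] L)
    (hF1 : ∀ g ∈ G, IsUnit (φ g))
    (hF2 : ∀ a : L, ∃ x : H, ∃ g ∈ G, a = φ x * Ring.inverse (φ g))
    (hF3 : ∀ x : H, φ x = 0 ↔ ∃ g ∈ G, x * g = 0) :
    ∃ (Δ : L →ₗ[k] L ⊗[k] L) (ε : L →ₗ[k] k),
      -- Δ_L and ε_L are determined on fractions:
      -- `Δ_L(x/g) = Σ (x′/g) ⊗ (x″/g) = ((φ ⊗ φ)(Δ x)) · (φ(g)⁻¹ ⊗ φ(g)⁻¹)`
      (∀ x : H, ∀ g ∈ G,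
        Δ (φ x * Ring.inverse (φ g)) =
          TensorProduct.map φ.toLinearMap φ.toLinearMap (Coalgebra.comul (R := k) x) *
            (Ring.inverse (φ g) ⊗ₜ[k] Ring.inverse (φ g))) ∧
      -- `ε_L(x/g) = ε(x)`
      (∀ x : H, ∀ g ∈ G,
        ε (φ x * Ring.inverse (φ g)) = Coalgebra.counit (R := k) x) ∧
      -- coassociativity:
      (∀ a : L, (TensorProduct.assoc k L L L)
          (TensorProduct.map Δ (LinearMap.id : L →ₗ[k] L) (Δ a)) =
        TensorProduct.map (LinearMap.id : L →ₗ[k] L) Δ (Δ a)) ∧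
      -- counit axioms:
      (∀ a : L, (TensorProduct.lid k L)
        (TensorProduct.map ε (LinearMap.id : L →ₗ[k] L) (Δ a)) = a) ∧
      (∀ a : L, (TensorProduct.rid k L)
        (TensorProduct.map (LinearMap.id : L →ₗ[k] L) ε (Δ a)) = a) ∧
      -- Δ_L and ε_L are homomorphisms of unital algebras, so `L` is a `k`-bialgebra:
      Δ 1 = 1 ∧ (∀ a b : L, Δ (a * b) = Δ a * Δ b) ∧
      ε 1 = 1 ∧ (∀ a b : L, ε (a * b) = ε a * ε b) ∧
      -- the localization map φ is a homomorphism of bialgebras: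
      (∀ x : H, Δ (φ x) =
        TensorProduct.map φ.toLinearMap φ.toLinearMap (Coalgebra.comul (R := k) x)) ∧
      (∀ x : H, ε (φ x) = Coalgebra.counit (R := k) x) := by
  exact stmt_4_general ⟨hF1, hF2, hF3⟩ fun g hg => ⟨(hGgl g hg).2, (hGgl g hg).1⟩
end

section
/- Let k be a field, let H, L and T be k-bialgebras, and let G ⊆ H be a submonoid consisting of group-like elements. Suppose φ : H → L is a bialgebra homomorphism such that φ(g) is invertible in L for every g ∈ G and such that every element of L is of the form φ(x)·φ(g)⁻¹ for some x ∈ H and g ∈ G. Let ψ : H → T be a bialgebra homomorphism such that ψ(g) is invertible in T for every g ∈ G, and let σ : L → T be a k-algebra homomorphism with σ ∘ φ = ψ. Then σ is also a homomorphism of coalgebras, i.e. (σ ⊗ σ) ∘ Δ_L = Δ_T ∘ σ and ε_T ∘ σ = ε_L, so σ is a bialgebra homomorphism. -/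
open scoped TensorProduct

/-!
Algebra homomorphisms out of `L` are determined by their restriction along `φ`, because a
multiplicative map that is known on `φ g` is forced on its inverse. Both sides of each coalgebra
identity for `σ` are algebra homomorphisms out of `L`, and along `φ` they agree because `φ` and
`σ ∘ φ` respect the coalgebra structures.
-/

section MonoidHom

variable {F M N : Type*} [MonoidWithZero M] [Monoid N] [FunLike F M N] [MonoidHomClass F M N]

theorem map_ringInverse_eq_of_map_eq {f₁ f₂ : F} {a : M} (ha : IsUnit a) (h : f₁ a = f₂ a) :
    f₁ (Ring.inverse a) = f₂ (Ring.inverse a) := by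
  have left_inv : f₁ (Ring.inverse a) * f₁ a = 1 := by
    rw [← map_mul, Ring.inverse_mul_cancel a ha, map_one]
  have right_inv : f₁ a * f₂ (Ring.inverse a) = 1 := by
    rw [h, ← map_mul, Ring.mul_inverse_cancel a ha, map_one]
  exact left_inv_eq_right_inv left_inv right_inv

theorem monoidHom_ext_of_forall_eq_mul_ringInverse {X : Type*} {φ : X → M} {S : Set X}
    (isUnit_φ : ∀ g ∈ S, IsUnit (φ g))
    (exists_fraction : ∀ a : M, ∃ x, ∃ g ∈ S, a = φ x * Ring.inverse (φ g))
    {f₁ f₂ : F} (h : ∀ x, f₁ (φ x) = f₂ (φ x)) : f₁ = f₂ := by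
  refine DFunLike.ext f₁ f₂ fun a ↦ ?_
  obtain ⟨x, g, hg, rfl⟩ := exists_fraction a
  rw [map_mul, map_mul, h x, map_ringInverse_eq_of_map_eq (isUnit_φ g hg) (h g)]

end MonoidHom

section CoalgHom

variable {R C D E : Type*} [CommSemiring R]
  [AddCommMonoid C] [AddCommMonoid D] [AddCommMonoid E] [Module R C] [Module R D] [Module R E]
  [CoalgebraStruct R C] [CoalgebraStruct R D] [CoalgebraStruct R E]
  {φ : C →ₗc[R] D} {ψ : C →ₗc[R] E} {σ : D →ₗ[R] E}

theorem comul_map_coalgHom_of_comp_eq (hσ : ∀ x, σ (φ x) = ψ x) (x : C) :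
    Coalgebra.comul (R := R) (σ (φ x)) =
      TensorProduct.map σ σ (Coalgebra.comul (R := R) (φ x)) := by
  have hcomp : σ ∘ₗ φ.toLinearMap = ψ.toLinearMap := LinearMap.ext hσ
  calc Coalgebra.comul (R := R) (σ (φ x))
      = Coalgebra.comul (R := R) (ψ x) := by rw [hσ]
    _ = TensorProduct.map ψ.toLinearMap ψ.toLinearMap (Coalgebra.comul (R := R) x) :=
        (CoalgHomClass.map_comp_comul_apply ψ x).symm
    _ = TensorProduct.map σ σ
          (TensorProduct.map φ.toLinearMap φ.toLinearMap (Coalgebra.comul (R := R) x)) := by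
        rw [← hcomp, TensorProduct.map_comp, LinearMap.comp_apply]
    _ = TensorProduct.map σ σ (Coalgebra.comul (R := R) (φ x)) :=
        congrArg (TensorProduct.map σ σ) (CoalgHomClass.map_comp_comul_apply φ x)

theorem counit_map_coalgHom_of_comp_eq (hσ : ∀ x, σ (φ x) = ψ x) (x : C) :
    Coalgebra.counit (R := R) (σ (φ x)) = Coalgebra.counit (R := R) (φ x) := by
  rw [hσ, CoalgHomClass.counit_comp_apply, CoalgHomClass.counit_comp_apply]

end CoalgHom

theorem stmt_7_general {k H L T : Type*} [CommSemiring k] [AddCommMonoid H] [Module k H]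
    [Coalgebra k H] [Semiring L] [Semiring T] [Bialgebra k L] [Bialgebra k T]
    (S : Set H) (φ : H →ₗc[k] L) (isUnit_φ : ∀ g ∈ S, IsUnit (φ g))
    (exists_fraction : ∀ a : L, ∃ x : H, ∃ g ∈ S, a = φ x * Ring.inverse (φ g))
    (ψ : H →ₗc[k] T) (σ : L →ₐ[k] T) (hσ : ∀ x : H, σ (φ x) = ψ x) :
    (∀ a : L, Coalgebra.comul (R := k) (σ a) =
      TensorProduct.map σ.toLinearMap σ.toLinearMap (Coalgebra.comul (R := k) a)) ∧
    (∀ a : L, Coalgebra.counit (R := k) (σ a) = Coalgebra.counit (R := k) a) := by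
  have comul_comp : (Bialgebra.comulAlgHom k T).comp σ =
      (Algebra.TensorProduct.map σ σ).comp (Bialgebra.comulAlgHom k L) :=
    monoidHom_ext_of_forall_eq_mul_ringInverse isUnit_φ exists_fraction
      (comul_map_coalgHom_of_comp_eq (σ := σ.toLinearMap) hσ)
  have counit_comp : (Bialgebra.counitAlgHom k T).comp σ = Bialgebra.counitAlgHom k L :=
    monoidHom_ext_of_forall_eq_mul_ringInverse isUnit_φ exists_fraction
      (counit_map_coalgHom_of_comp_eq (σ := σ.toLinearMap) hσ)
  exact ⟨DFunLike.congr_fun comul_comp, DFunLike.congr_fun counit_comp⟩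

/-- Let `k` be a field, let `H`, `L` and `T` be `k`-bialgebras, and let
`G ⊆ H` be a submonoid consisting of group-like elements.  Suppose `φ : H → L` is a
bialgebra homomorphism such that `φ(g)` is invertible in `L` for every `g ∈ G` and such
that every element of `L` is of the form `φ(x)·φ(g)⁻¹` for some `x ∈ H` and `g ∈ G`.
Let `ψ : H → T` be a bialgebra homomorphism such that `ψ(g)` is invertible in `T` for
every `g ∈ G`, and let `σ : L → T` be a `k`-algebra homomorphism with `σ ∘ φ = ψ`.
Then `σ` is also a homomorphism of coalgebras, i.e. `(σ ⊗ σ) ∘ Δ_L = Δ_T ∘ σ` and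
`ε_T ∘ σ = ε_L`, so `σ` is a bialgebra homomorphism. -/
theorem stmt_7 {k H L T : Type*} [Field k] [Ring H] [Ring L] [Ring T]
    [Bialgebra k H] [Bialgebra k L] [Bialgebra k T]
    (G : Submonoid H)
    (hGgl : ∀ g ∈ G, Coalgebra.comul (R := k) g = g ⊗ₜ[k] g ∧
      Coalgebra.counit (R := k) g = (1 : k))
    (φ : H →ₐc[k] L)
    (hF1 : ∀ g ∈ G, IsUnit (φ g))
    (hF2 : ∀ a : L, ∃ x : H, ∃ g ∈ G, a = φ x * Ring.inverse (φ g))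
    (ψ : H →ₐc[k] T)
    (hψ : ∀ g ∈ G, IsUnit (ψ g))
    (σ : L →ₐ[k] T)
    (hσ : ∀ x : H, σ (φ x) = ψ x) :
    (∀ a : L, Coalgebra.comul (R := k) (σ a) =
      TensorProduct.map σ.toLinearMap σ.toLinearMap (Coalgebra.comul (R := k) a)) ∧
    (∀ a : L, Coalgebra.counit (R := k) (σ a) = Coalgebra.counit (R := k) a) :=
  stmt_7_general (G : Set H) (φ : H →ₗc[k] L) hF1 hF2 (ψ : H →ₗc[k] T) σ hσ
end

section
/- Let k be a field, H and L k-bialgebras, and G ⊆ H a submonoid consisting of group-like elements. Suppose φ : H → L is a bialgebra homomorphism such that (F1) φ(g) is invertible in L for every g ∈ G, (F2) every element of L is of the form φ(x)·φ(g)⁻¹ with x ∈ H and g ∈ G, and (F3) for x ∈ H one has φ(x) = 0 if and only if x·g = 0 for some g ∈ G. Then for every k-bialgebra T and every bialgebra homomorphism ψ : H → T such that ψ(g) is invertible in T for all g ∈ G, there exists a unique bialgebra homomorphism σ : L → T with σ ∘ φ = ψ. -/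
open scoped TensorProduct

/-!
The map `σ` is obtained from its graph. Since `L` consists of right fractions, `G` is a right Ore
set, so the right fractions of any algebra homomorphism out of `H` form a subalgebra. For
`(φ, ψ) : H → L × T` this subalgebra projects bijectively onto `L`: onto because `ψ` inverts `G`,
and one-to-one because `φ x = 0` forces `x * g = 0`, hence `ψ x = 0`. It is therefore the graph of
an algebra homomorphism `σ`. As `φ` is an epimorphism of algebras, the compatibility of `σ` with
`ε` and `Δ` can be checked after composing with `φ`, where it is that of `ψ`.
-/

/-- The right Ore condition for a submonoid `G`: every left fraction `g⁻¹ x` with denominator in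
`G` can be rewritten as a right fraction `y h⁻¹`. -/
def IsRightOre {H : Type*} [Monoid H] (G : Submonoid H) : Prop :=
  ∀ x : H, ∀ g ∈ G, ∃ y : H, ∃ h ∈ G, x * h = g * y

/-- `φ : H → L` exhibits `L` as a right ring of fractions of `H` with denominator set `G`. The
condition (F2) that every element of `L` is a fraction `φ x * (φ g)⁻¹` is expressed without
inverses, and of the equivalence (F3) only the direction that is not a consequence of (F1) is a
field. -/
structure IsRightFractionMap {H L : Type*} [MonoidWithZero H] [MonoidWithZero L]
    (G : Submonoid H) (φ : H → L) : Prop where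
  isUnit_map : ∀ g ∈ G, IsUnit (φ g)
  exists_mul_map_eq : ∀ a : L, ∃ x : H, ∃ g ∈ G, a * φ g = φ x
  exists_mul_eq_zero : ∀ x : H, φ x = 0 → ∃ g ∈ G, x * g = 0

/-- The subalgebra of right fractions of `f`: those `a` with `a * f g = f x` for some `x` and some
`g ∈ G`. Stated in this form, closure under the operations does not require `f g` to be
invertible. -/
def rightFractions {k H A : Type*} [CommSemiring k] [Semiring H] [Semiring A] [Algebra k H]
    [Algebra k A] {G : Submonoid H} (hG : IsRightOre G) (f : H →ₐ[k] A) : Subalgebra k A where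
  carrier := {a | ∃ x : H, ∃ g ∈ G, a * f g = f x}
  mul_mem' := by
    rintro a b ⟨x, g, hg, hx⟩ ⟨y, h, hh, hy⟩
    obtain ⟨z, t, ht, hz⟩ := hG y g hg
    refine ⟨x * z, h * t, mul_mem hh ht, ?_⟩
    calc a * b * f (h * t) = a * (b * f h * f t) := by simp only [map_mul, mul_assoc]
      _ = a * f (g * z) := by rw [hy, ← map_mul, hz]
      _ = f (x * z) := by rw [map_mul, map_mul, ← hx, mul_assoc]
  add_mem' := by
    rintro a b ⟨x, g, hg, hx⟩ ⟨y, h, hh, hy⟩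
    obtain ⟨z, t, ht, hz⟩ := hG g h hh
    refine ⟨x * t + y * z, g * t, mul_mem hg ht, ?_⟩
    calc (a + b) * f (g * t) = a * f (g * t) + b * f (h * z) := by rw [add_mul, hz]
      _ = a * f g * f t + b * f h * f z := by simp only [map_mul, mul_assoc]
      _ = f (x * t + y * z) := by rw [hx, hy, map_add, map_mul, map_mul]
  algebraMap_mem' r := ⟨algebraMap k H r, 1, one_mem G, by simp⟩

theorem map_mem_rightFractions {k H A : Type*} [CommSemiring k] [Semiring H] [Semiring A]
    [Algebra k H] [Algebra k A] {G : Submonoid H} (hG : IsRightOre G) (f : H →ₐ[k] A) (x : H) :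
    f x ∈ rightFractions hG f :=
  ⟨x, 1, one_mem G, by simp⟩

namespace IsRightFractionMap

section Ring

variable {F H L : Type*} [Ring H] [Ring L] [FunLike F H L] [RingHomClass F H L]
  {G : Submonoid H} {φ : F}

theorem exists_mul_eq_mul (hφ : IsRightFractionMap G φ) {x y : H} (hxy : φ x = φ y) :
    ∃ g ∈ G, x * g = y * g := by
  obtain ⟨g, hg, h⟩ := hφ.exists_mul_eq_zero (x - y) (by rw [map_sub, hxy, sub_self])
  exact ⟨g, hg, by rwa [sub_mul, sub_eq_zero] at h⟩

theorem isRightOre (hφ : IsRightFractionMap G φ) : IsRightOre G := by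
  intro x g hg
  obtain ⟨u, hu⟩ := hφ.isUnit_map g hg
  obtain ⟨y, h, hh, hy⟩ := hφ.exists_mul_map_eq (↑u⁻¹ * φ x)
  have map_eq : φ (x * h) = φ (g * y) := by
    rw [map_mul, map_mul, ← hy, ← hu, mul_assoc, Units.mul_inv_cancel_left]
  obtain ⟨t, ht, hxt⟩ := hφ.exists_mul_eq_mul map_eq
  exact ⟨y * t, h * t, mul_mem hh ht, by rw [← mul_assoc, hxt, mul_assoc]⟩

end Ring

theorem algHom_ext {k H L A : Type*} [CommSemiring k] [Semiring H] [Semiring L] [Semiring A]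
    [Algebra k H] [Algebra k L] [Algebra k A] {G : Submonoid H} {φ : H →ₐ[k] L}
    (hφ : IsRightFractionMap G φ) {σ τ : L →ₐ[k] A} (h : σ.comp φ = τ.comp φ) : σ = τ := by
  ext a
  obtain ⟨x, g, hg, hx⟩ := hφ.exists_mul_map_eq a
  have map_eq (y : H) : σ (φ y) = τ (φ y) := DFunLike.congr_fun h y
  apply ((hφ.isUnit_map g hg).map σ).mul_right_cancel
  rw [← map_mul, hx, map_eq, map_eq, ← hx, map_mul]

section Algebra

variable {k H L T : Type*} [CommRing k] [Ring H] [Ring L] [Ring T] [Algebra k H] [Algebra k L]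
  [Algebra k T] {G : Submonoid H} {φ : H →ₐ[k] L}

theorem bijective_fst_rightFractions_prod (hφ : IsRightFractionMap G φ) (ψ : H →ₐ[k] T)
    (hψ : ∀ g ∈ G, IsUnit (ψ g)) :
    Function.Bijective
      ((AlgHom.fst k L T).comp (rightFractions hφ.isRightOre (φ.prod ψ)).val) := by
  constructor
  · rw [injective_iff_map_eq_zero]
    rintro ⟨⟨a, b⟩, x, g, hg, hx⟩ (rfl : a = 0)
    obtain ⟨hφx, hψx⟩ : 0 * φ g = φ x ∧ b * ψ g = ψ x := Prod.ext_iff.mp hx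
    obtain ⟨h, hh, hxh⟩ := hφ.exists_mul_eq_zero x (by rw [← hφx, zero_mul])
    have map_eq_zero : ψ x = 0 :=
      (hψ h hh).mul_left_eq_zero.mp (by rw [← map_mul, hxh, map_zero])
    have b_eq_zero : b = 0 := (hψ g hg).mul_left_eq_zero.mp (hψx.trans map_eq_zero)
    exact Subtype.ext (Prod.ext rfl b_eq_zero)
  · intro a
    obtain ⟨x, g, hg, hx⟩ := hφ.exists_mul_map_eq a
    obtain ⟨u, hu⟩ := hψ g hg
    have mul_map_eq : ψ x * ↑u⁻¹ * ψ g = ψ x := by rw [← hu, Units.inv_mul_cancel_right]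
    exact ⟨⟨(a, ψ x * ↑u⁻¹), x, g, hg, Prod.ext hx mul_map_eq⟩, rfl⟩

/-- The extension to `L` of an algebra homomorphism `ψ` inverting `G`, defined as the map whose
graph is the algebra of right fractions of `(φ, ψ)`. -/
noncomputable def lift (hφ : IsRightFractionMap G φ) (ψ : H →ₐ[k] T)
    (hψ : ∀ g ∈ G, IsUnit (ψ g)) : L →ₐ[k] T :=
  ((AlgHom.snd k L T).comp (rightFractions hφ.isRightOre (φ.prod ψ)).val).comp
    (AlgEquiv.ofBijective _ (hφ.bijective_fst_rightFractions_prod ψ hψ)).symm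

theorem lift_comp (hφ : IsRightFractionMap G φ) (ψ : H →ₐ[k] T)
    (hψ : ∀ g ∈ G, IsUnit (ψ g)) : (hφ.lift ψ hψ).comp φ = ψ := by
  ext x
  let p : rightFractions hφ.isRightOre (φ.prod ψ) := ⟨_, map_mem_rightFractions _ _ x⟩
  have symm_map :
      (AlgEquiv.ofBijective _ (hφ.bijective_fst_rightFractions_prod ψ hψ)).symm (φ x) = p :=
    (AlgEquiv.symm_apply_eq _).mpr rfl
  exact congrArg (fun q ↦ q.val.2) symm_map

end Algebra

section Bialgebra

variable {k H L T : Type*} [CommSemiring k] [Semiring H] [Semiring L] [Semiring T] [Bialgebra k H]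
  [Bialgebra k L] [Bialgebra k T] {G : Submonoid H} {φ : H →ₐc[k] L} {ψ : H →ₐc[k] T}
  {σ : L →ₐ[k] T}

theorem counitAlgHom_comp_of_comp_eq (hφ : IsRightFractionMap G φ)
    (hσ : σ.comp (φ : H →ₐ[k] L) = ψ) :
    (Bialgebra.counitAlgHom k T).comp σ = Bialgebra.counitAlgHom k L := by
  apply algHom_ext (φ := (φ : H →ₐ[k] L)) hφ
  rw [AlgHom.comp_assoc, hσ, BialgHom.counitAlgHom_comp, BialgHom.counitAlgHom_comp]

theorem map_comp_comulAlgHom_of_comp_eq (hφ : IsRightFractionMap G φ)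
    (hσ : σ.comp (φ : H →ₐ[k] L) = ψ) :
    (Algebra.TensorProduct.map σ σ).comp (Bialgebra.comulAlgHom k L) =
      (Bialgebra.comulAlgHom k T).comp σ := by
  apply algHom_ext (φ := (φ : H →ₐ[k] L)) hφ
  rw [AlgHom.comp_assoc, AlgHom.comp_assoc, hσ, ← BialgHom.map_comp_comulAlgHom,
    ← BialgHom.map_comp_comulAlgHom, ← AlgHom.comp_assoc, ← Algebra.TensorProduct.map_comp, hσ]

end Bialgebra

end IsRightFractionMap

theorem stmt_14_general {k H L T : Type*} [CommRing k] [Ring H] [Ring L] [Ring T]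
    [Bialgebra k H] [Bialgebra k L] [Bialgebra k T] {G : Submonoid H} {φ : H →ₐc[k] L}
    (hφ : IsRightFractionMap G φ) (ψ : H →ₐc[k] T) (hψ : ∀ g ∈ G, IsUnit (ψ g)) :
    ∃! σ : L →ₐc[k] T, ∀ x : H, σ (φ x) = ψ x := by
  have hφ' : IsRightFractionMap G (φ : H →ₐ[k] L) := hφ
  obtain ⟨σ, hσ⟩ : ∃ σ : L →ₐ[k] T, σ.comp (φ : H →ₐ[k] L) = ψ :=
    ⟨_, hφ'.lift_comp (ψ : H →ₐ[k] T) hψ⟩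
  refine ⟨BialgHom.ofAlgHom σ (hφ.counitAlgHom_comp_of_comp_eq hσ)
    (hφ.map_comp_comulAlgHom_of_comp_eq hσ), DFunLike.congr_fun hσ, fun τ hτ ↦ ?_⟩
  have τ_comp : (τ : L →ₐ[k] T).comp (φ : H →ₐ[k] L) = ψ := AlgHom.ext hτ
  exact BialgHom.coe_toAlgHom_injective (hφ'.algHom_ext (τ_comp.trans hσ.symm))

/-- Let `k` be a field, `H` and `L` `k`-bialgebras, and `G ⊆ H` a
submonoid consisting of group-like elements.  Suppose `φ : H → L` is a bialgebra
homomorphism such that (F1) `φ(g)` is invertible in `L` for every `g ∈ G`, (F2) every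
element of `L` is of the form `φ(x)·φ(g)⁻¹` with `x ∈ H` and `g ∈ G`, and (F3) for
`x ∈ H` one has `φ(x) = 0` if and only if `x·g = 0` for some `g ∈ G`.  Then for every
`k`-bialgebra `T` and every bialgebra homomorphism `ψ : H → T` such that `ψ(g)` is
invertible in `T` for all `g ∈ G`, there exists a unique bialgebra homomorphism
`σ : L → T` with `σ ∘ φ = ψ`. -/
theorem stmt_14 {k H L T : Type*} [Field k] [Ring H] [Ring L] [Ring T]
    [Bialgebra k H] [Bialgebra k L] [Bialgebra k T]
    (G : Submonoid H)
    (hGgl : ∀ g ∈ G, Coalgebra.comul (R := k) g = g ⊗ₜ[k] g ∧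
      Coalgebra.counit (R := k) g = (1 : k))
    (φ : H →ₐc[k] L)
    (hF1 : ∀ g ∈ G, IsUnit (φ g))
    (hF2 : ∀ a : L, ∃ x : H, ∃ g ∈ G, a = φ x * Ring.inverse (φ g))
    (hF3 : ∀ x : H, φ x = 0 ↔ ∃ g ∈ G, x * g = 0)
    (ψ : H →ₐc[k] T)
    (hψ : ∀ g ∈ G, IsUnit (ψ g)) :
    ∃! σ : L →ₐc[k] T, ∀ x : H, σ (φ x) = ψ x :=
  stmt_14_general ⟨hF1, fun a ↦
    let ⟨x, g, hg, ha⟩ := hF2 a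
    ⟨x, g, hg, (Ring.eq_mul_inverse_iff_mul_eq a (φ x) (φ g) (hF1 g hg)).mp ha⟩,
    fun x ↦ (hF3 x).mp⟩ ψ hψ
end
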